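/- Let Ψ be either the class of all forests or the class of all bipartite graphs, let α, β be reals with 2 < α ≤ 3 and 4α − β = 6, and let G be a minimal counterexample for Ψ, α, β. Then G has no vertex cut of size at most 3, and G has no vertex cut M with |M| = 4 such that the induced subgraph G[M] is a complete graph K4. -/

import Mathlib

/-!
Write `q` for the quality function. If a clique `M` separates `G` into `L` and `R`, then
`q(G) + q(G[M]) = q(G[M ∪ L]) + q(G[M ∪ R])`. Moreover neither `G[M ∪ L]` nor `G[M ∪ R]` has a
`Ψ`-cut, because the clique `M` lies on one side of any cut of `G[M ∪ L]` (apart from cut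
vertices), so `R` can be added to that side to give a `Ψ`-cut of `G`. When `|M| ≥ 3`, both parts have at least four
vertices, and minimality of `G` makes both qualities nonpositive; hence `q(G[M]) < 0`. This
contradicts `q(K₃) = 3 - α ≥ 0` and `q(K₄) = 0`. Finally, a cut with at most three vertices that is
not a forest (or not bipartite) must induce a triangle, so the first claim is the case `K₃`.
-/

open SimpleGraph

/-- `M` is a vertex cut of `G`: the complement of `M` can be partitioned into two nonempty
sets `L`, `R` with no edge of `G` joining a vertex of `L` to a vertex of `R`. -/
def IsVertexCut {V : Type*} (G : SimpleGraph V) (M : Set V) : Prop :=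
  ∃ L R : Set V, L.Nonempty ∧ R.Nonempty ∧ Disjoint L R ∧ L ∪ R = Mᶜ ∧
    ∀ x ∈ L, ∀ y ∈ R, ¬ G.Adj x y

/-- `(M, L, R)` is a separation of `G`. -/
def IsSeparation {V : Type*} (G : SimpleGraph V) (M L R : Set V) : Prop :=
  L.Nonempty ∧ R.Nonempty ∧ M ∪ L ∪ R = Set.univ ∧
  Disjoint M L ∧ Disjoint M R ∧ Disjoint L R ∧
  ∀ x ∈ L, ∀ y ∈ R, ¬ G.Adj x y

/-- The quality function `q_{α,β}(G) = α|V(G)| − |E(G)| − β`. -/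
noncomputable def quality {V : Type*} (α β : ℝ) (G : SimpleGraph V) : ℝ :=
  α * Nat.card V - Nat.card G.edgeSet - β

/-- degree of a vertex as the cardinality of its neighbor set. -/
noncomputable def vdeg {V : Type*} (G : SimpleGraph V) (v : V) : ℕ :=
  (G.neighborSet v).ncard

/-- The class of forests. -/
def ForestClass : ∀ (W : Type), SimpleGraph W → Prop := fun _ H => H.IsAcyclic

/-- The class of bipartite graphs. -/
def BipartiteClass : ∀ (W : Type), SimpleGraph W → Prop := fun _ H => H.Colorable 2

/-- `G` has a `Ψ`-cut: a vertex cut whose induced subgraph lies in `Ψ`. -/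
def HasPsiCut (Ψ : ∀ (W : Type), SimpleGraph W → Prop) {V : Type} (G : SimpleGraph V) : Prop :=
  ∃ M : Set V, IsVertexCut G M ∧ Ψ ↥M (G.induce M)

/-- `G` has a forest cut. -/
def HasForestCut {V : Type*} (G : SimpleGraph V) : Prop :=
  ∃ M : Set V, IsVertexCut G M ∧ (G.induce M).IsAcyclic

/-- `G` has a bipartite cut. -/
def HasBipartiteCut {V : Type*} (G : SimpleGraph V) : Prop :=
  ∃ M : Set V, IsVertexCut G M ∧ (G.induce M).Colorable 2

/-- `G` has an independent cut. -/
def HasIndependentCut {V : Type*} (G : SimpleGraph V) : Prop :=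
  ∃ M : Set V, IsVertexCut G M ∧ ∀ x ∈ M, ∀ y ∈ M, ¬ G.Adj x y

/-- `G` is a minimal counterexample for the class `Ψ` and parameters `α`, `β`. -/
def MinCounterexample (Ψ : ∀ (W : Type), SimpleGraph W → Prop) (α β : ℝ)
    {V : Type} (G : SimpleGraph V) : Prop :=
  4 ≤ Nat.card V ∧ 0 < quality α β G ∧ ¬ HasPsiCut Ψ G ∧
  ∀ (W : Type) (H : SimpleGraph W),
    4 ≤ Nat.card W → Nat.card W < Nat.card V → 0 < quality α β H → HasPsiCut Ψ H

/-- `T0`: a triangle together with an isolated vertex. -/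
def graphT0 : SimpleGraph (Fin 4) := SimpleGraph.fromEdgeSet {s(0,1), s(0,2), s(1,2)}

/-- `T1`: a triangle with an extra vertex joined to exactly one triangle vertex. -/
def graphT1 : SimpleGraph (Fin 4) := SimpleGraph.fromEdgeSet {s(0,1), s(0,2), s(1,2), s(2,3)}

/-- The diamond graph `K4` minus one edge. -/
def diamondGraph : SimpleGraph (Fin 4) := (⊤ : SimpleGraph (Fin 4)).deleteEdges {s(0,1)}

/-- Number of edges of `G` with one endpoint in `X` and the other outside `X`. -/
noncomputable def crossEdges {V : Type*} (G : SimpleGraph V) (X : Set V) : ℕ :=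
  {e : Sym2 V | e ∈ G.edgeSet ∧ ∃ x ∈ X, ∃ y ∉ X, e = s(x,y)}.ncard

/-- Both classes are invariant under isomorphism. -/
lemma psi_of_iso {Ψ : ∀ (W : Type), SimpleGraph W → Prop}
    (hΨ : Ψ = ForestClass ∨ Ψ = BipartiteClass) {W W' : Type} {H : SimpleGraph W}
    {H' : SimpleGraph W'} (e : H ≃g H') (h : Ψ W H) : Ψ W' H' := by
  rcases hΨ with rfl | rfl
  · exact e.isAcyclic_iff.1 h
  · exact SimpleGraph.Colorable.of_hom e.symm.toHom h

/-- Both classes contain all forests. -/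
lemma psi_of_isAcyclic {Ψ : ∀ (W : Type), SimpleGraph W → Prop}
    (hΨ : Ψ = ForestClass ∨ Ψ = BipartiteClass) {W : Type} {H : SimpleGraph W}
    (h : H.IsAcyclic) : Ψ W H := by
  rcases hΨ with rfl | rfl
  · exact h
  · exact h.isBipartite

/-- A graph on at most three vertices containing a cycle is a triangle. -/
lemma eq_top_of_not_isAcyclic {W : Type*} [Fintype W] {H : SimpleGraph W}
    (hc : Fintype.card W ≤ 3) (h : ¬ H.IsAcyclic) : Fintype.card W = 3 ∧ H = ⊤ := by
  classical
  simp only [SimpleGraph.IsAcyclic, not_forall, not_not] at h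
  obtain ⟨v, c, hcyc⟩ := h
  have h3 := hcyc.three_le_length
  have hle : c.support.tail.length ≤ Fintype.card W := hcyc.support_nodup.length_le_card
  rw [List.length_tail, SimpleGraph.Walk.length_support] at hle
  have hlen : c.length = 3 := by omega
  obtain ⟨s, hs⟩ := SimpleGraph.is3Clique_iff_exists_cycle_length_three.2 ⟨v, c, hcyc, hlen⟩
  have hcard : Fintype.card W = 3 := by omega
  have hsu : s = Finset.univ := (Finset.card_eq_iff_eq_univ s).1 (by rw [hs.card_eq, hcard])
  refine ⟨hcard, ?_⟩
  have := hs.isClique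
  rw [hsu] at this
  ext x y
  rw [SimpleGraph.top_adj]
  exact ⟨fun h => h.ne, fun h => this (by simp) (by simp) h⟩

lemma card_edgeSet_induce {V : Type*} (G : SimpleGraph V) (S : Set V) :
    Nat.card (G.induce S).edgeSet = {e ∈ G.edgeSet | ∀ v ∈ e, v ∈ S}.ncard := by
  rw [Nat.card_coe_set_eq,
    ← Set.ncard_image_of_injective _ (Sym2.map.injective (Subtype.val_injective (p := (· ∈ S))))]
  congr 1
  ext e
  constructor
  · rintro ⟨e, he, rfl⟩
    induction e with | _ x y => simpa using he
  · rintro ⟨he, hS⟩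
    induction e with | _ x y =>
    exact ⟨s(⟨x, hS x (by simp)⟩, ⟨y, hS y (by simp)⟩), by simpa using he, rfl⟩

/-- The quality function is additive over a separation. -/
lemma quality_add {V : Type*} [Finite V] (α β : ℝ) {G : SimpleGraph V} {M L R : Set V}
    (h : IsSeparation G M L R) :
    quality α β G + quality α β (G.induce M) =
      quality α β (G.induce (M ∪ L)) + quality α β (G.induce (M ∪ R)) := by
  obtain ⟨-, -, huniv, hML, hMR, hLR, hadj⟩ := h
  have hmem : ∀ x, x ∈ M ∨ x ∈ L ∨ x ∈ R := fun x => by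
    have : x ∈ M ∪ L ∪ R := huniv ▸ Set.mem_univ x
    simpa [or_assoc] using this
  have hLR' : ∀ x, x ∈ L → x ∉ R := fun x hx => Set.disjoint_left.1 hLR hx
  have hinter : (M ∪ L) ∩ (M ∪ R) = M := by
    ext x; have := hLR' x; simp only [Set.mem_inter_iff, Set.mem_union]; tauto
  have hunion : (M ∪ L) ∪ (M ∪ R) = Set.univ := by
    ext x; have := hmem x; simp only [Set.mem_union, Set.mem_univ]; tauto
  have hV := Set.ncard_union_add_ncard_inter (M ∪ L) (M ∪ R)
  rw [hinter, hunion, Set.ncard_univ] at hV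
  have hE := Set.ncard_union_add_ncard_inter {e ∈ G.edgeSet | ∀ v ∈ e, v ∈ M ∪ L}
    {e ∈ G.edgeSet | ∀ v ∈ e, v ∈ M ∪ R}
  have hEi : {e ∈ G.edgeSet | ∀ v ∈ e, v ∈ M ∪ L} ∩ {e ∈ G.edgeSet | ∀ v ∈ e, v ∈ M ∪ R} =
      {e ∈ G.edgeSet | ∀ v ∈ e, v ∈ M} := by
    ext e
    constructor
    · rintro ⟨⟨he, h1⟩, -, h2⟩
      exact ⟨he, fun v hv => hinter ▸ ⟨h1 v hv, h2 v hv⟩⟩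
    · rintro ⟨he, h1⟩
      exact ⟨⟨he, fun v hv => Or.inl (h1 v hv)⟩, he, fun v hv => Or.inl (h1 v hv)⟩
  have hEu : {e ∈ G.edgeSet | ∀ v ∈ e, v ∈ M ∪ L} ∪ {e ∈ G.edgeSet | ∀ v ∈ e, v ∈ M ∪ R} =
      G.edgeSet := by
    ext e
    constructor
    · rintro (h | h) <;> exact h.1
    · intro he
      induction e with | _ x y =>
      have h1 := hadj x
      have h2 := hadj y
      have he' : G.Adj x y := he
      have h3 := hmem x
      have h4 := hmem y
      have h5 : x ∈ L → y ∉ R := fun a b => h1 a y b he'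
      have h6 : y ∈ L → x ∉ R := fun a b => h2 a x b he'.symm
      simp only [Set.mem_union, Set.mem_ofPred_eq, Sym2.mem_iff, forall_eq_or_imp, forall_eq]
      tauto
  rw [hEi, hEu, ← card_edgeSet_induce, ← card_edgeSet_induce, ← card_edgeSet_induce,
    ← Nat.card_coe_set_eq] at hE
  simp only [← Nat.card_coe_set_eq] at hV
  unfold quality
  have hV' : (Nat.card V : ℝ) + Nat.card M = Nat.card ↥(M ∪ L) + Nat.card ↥(M ∪ R) := by
    exact_mod_cast hV
  have hE' : (Nat.card G.edgeSet : ℝ) + Nat.card (G.induce M).edgeSet =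
      Nat.card (G.induce (M ∪ L)).edgeSet + Nat.card (G.induce (M ∪ R)).edgeSet := by
    exact_mod_cast hE
  linear_combination α * hV' - hE'

/-- A cut of one part `G[S]`, one of whose sides `B` avoids the attachment set, is a cut of `G`:
`A` is enlarged by all vertices outside `S`. -/
lemma isVertexCut_image {V : Type*} {G : SimpleGraph V} {S : Set V} {N A B : Set S}
    (hA : A.Nonempty) (hB : B.Nonempty) (hAB : Disjoint A B) (hu : A ∪ B = Nᶜ)
    (hadj : ∀ x ∈ A, ∀ y ∈ B, ¬ G.Adj x y)
    (hout : ∀ x ∉ S, ∀ y ∈ B, ¬ G.Adj x y) : IsVertexCut G (Subtype.val '' N) := by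
  refine ⟨Subtype.val '' A ∪ Sᶜ, Subtype.val '' B, (hA.image _).inl, hB.image _, ?_, ?_, ?_⟩
  · rw [Set.disjoint_left]
    rintro _ (⟨a, ha, rfl⟩ | hx) ⟨b, hb, hab⟩
    · exact Set.disjoint_left.1 hAB ha (Subtype.ext hab ▸ hb)
    · exact hx (hab ▸ b.2)
  · ext x
    by_cases hx : x ∈ S
    · have := Set.ext_iff.1 hu ⟨x, hx⟩
      simpa [hx] using this
    · simp [hx]
  · rintro _ (⟨a, ha, rfl⟩ | hx) _ ⟨b, hb, rfl⟩
    · exact hadj a ha b hb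
    · exact hout _ hx b hb

/-- Cutting along a clique creates no new `Ψ`-cuts: a `Ψ`-cut of `G[M ∪ L]` extends to one of `G`,
since the clique `M` cannot meet both sides of it. -/
lemma not_hasPsiCut_induce {Ψ : ∀ (W : Type), SimpleGraph W → Prop}
    (hΨ : Ψ = ForestClass ∨ Ψ = BipartiteClass) {V : Type} {G : SimpleGraph V}
    {M L R : Set V} (h : IsSeparation G M L R) (hM : G.induce M = ⊤) (hG : ¬ HasPsiCut Ψ G) :
    ¬ HasPsiCut Ψ (G.induce (M ∪ L)) := by
  rintro ⟨N, ⟨A, B, hA, hB, hAB, hu, hadj⟩, hN⟩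
  obtain ⟨-, -, huniv, -, -, -, hLR⟩ := h
  have hmem : ∀ x, x ∉ M ∪ L → x ∈ R := fun x hx => by
    have : x ∈ M ∪ L ∪ R := huniv ▸ Set.mem_univ x
    exact this.resolve_left hx
  have hiso : (G.induce (M ∪ L)).induce N ≃g G.induce (Subtype.val '' N) :=
    { toEquiv := Equiv.Set.image _ N Subtype.val_injective
      map_rel_iff' := by simp }
  have hadj' : ∀ x ∈ A, ∀ y ∈ B, ¬ G.Adj x y := hadj
  -- A side of the cut that avoids `M` lies in `L`, so it has no neighbours in `R`.
  have hout : ∀ C : Set ↥(M ∪ L), (∀ y ∈ C, y.1 ∉ M) → ∀ x ∉ M ∪ L, ∀ y ∈ C, ¬ G.Adj x y :=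
    fun C hC x hx y hy hxy => hLR y (y.2.resolve_left (hC y hy)) x (hmem x hx) hxy.symm
  refine hG ⟨Subtype.val '' N, ?_, psi_of_iso hΨ hiso hN⟩
  by_cases hBM : ∀ y ∈ B, y.1 ∉ M
  · exact isVertexCut_image hA hB hAB hu hadj' (hout B hBM)
  · push Not at hBM
    obtain ⟨b, hb, hbM⟩ := hBM
    refine isVertexCut_image hB hA hAB.symm ((Set.union_comm B A).trans hu)
      (fun x hx y hy hxy => hadj' y hy x hx hxy.symm) (hout A fun a ha haM => ?_)
    have hne : a.1 ≠ b.1 := fun hab =>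
      Set.disjoint_left.1 hAB ha (Subtype.ext hab ▸ hb)
    have : (G.induce M).Adj ⟨a, haM⟩ ⟨b, hbM⟩ := by
      rw [hM, SimpleGraph.top_adj]; exact fun h => hne (Subtype.mk.inj h)
    exact hadj' a ha b hb this

lemma IsSeparation.swap {V : Type*} {G : SimpleGraph V} {M L R : Set V}
    (h : IsSeparation G M L R) : IsSeparation G M R L := by
  obtain ⟨h1, h2, h3, h4, h5, h6, h7⟩ := h
  exact ⟨h2, h1, by rw [Set.union_right_comm, h3], h5, h4, h6.symm,
    fun x hx y hy hxy => h7 y hy x hx hxy.symm⟩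

lemma IsVertexCut.exists_isSeparation {V : Type*} {G : SimpleGraph V} {M : Set V}
    (h : IsVertexCut G M) : ∃ L R, IsSeparation G M L R := by
  obtain ⟨L, R, hL, hR, hLR, hu, hadj⟩ := h
  have hd : Disjoint M (L ∪ R) := hu ▸ disjoint_compl_right
  rw [Set.disjoint_union_right] at hd
  exact ⟨L, R, hL, hR, by rw [Set.union_assoc, hu, Set.union_compl_self], hd.1, hd.2, hLR, hadj⟩

lemma quality_induce_nonpos {Ψ : ∀ (W : Type), SimpleGraph W → Prop}
    (hΨ : Ψ = ForestClass ∨ Ψ = BipartiteClass) {α β : ℝ} {V : Type} [Finite V]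
    {G : SimpleGraph V} (hG : MinCounterexample Ψ α β G) {M L R : Set V}
    (h : IsSeparation G M L R) (hM : G.induce M = ⊤) (h3 : 3 ≤ M.ncard) :
    quality α β (G.induce (M ∪ L)) ≤ 0 := by
  obtain ⟨-, -, hcut, hmin⟩ := hG
  by_contra! hq
  refine not_hasPsiCut_induce hΨ h hM hcut (hmin _ _ ?_ ?_ hq)
  · have hL := h.1.ncard_pos
    rw [Nat.card_coe_set_eq, Set.ncard_union_eq h.2.2.2.1]
    omega
  · obtain ⟨r, hr⟩ := h.2.1
    rw [Nat.card_coe_set_eq, ← Set.ncard_univ]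
    refine Set.ncard_lt_ncard ⟨Set.subset_univ _, fun hs => ?_⟩
    rcases hs (Set.mem_univ r) with hrM | hrL
    · exact Set.disjoint_left.1 h.2.2.2.2.1 hrM hr
    · exact Set.disjoint_left.1 h.2.2.2.2.2.1 hrL hr

/-- A complete cut on at least three vertices has negative quality. -/
lemma quality_clique_cut_neg {Ψ : ∀ (W : Type), SimpleGraph W → Prop}
    (hΨ : Ψ = ForestClass ∨ Ψ = BipartiteClass) {α β : ℝ} {V : Type} [Finite V]
    {G : SimpleGraph V} (hG : MinCounterexample Ψ α β G) {M : Set V}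
    (hcut : IsVertexCut G M) (hM : G.induce M = ⊤) (h3 : 3 ≤ M.ncard) :
    quality α β (G.induce M) < 0 := by
  obtain ⟨L, R, h⟩ := hcut.exists_isSeparation
  have h1 := quality_induce_nonpos hΨ hG h hM h3
  have h2 := quality_induce_nonpos hΨ hG h.swap hM h3
  have h4 := quality_add α β h
  have h5 := hG.2.1
  linarith

lemma quality_top {W : Type*} [Finite W] (α β : ℝ) :
    quality α β (⊤ : SimpleGraph W) =
      α * Nat.card W - (Nat.card W).choose 2 - β := by
  classical
  have := Fintype.ofFinite W
  rw [quality, Nat.card_eq_fintype_card, Nat.card_eq_fintype_card,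
    ← SimpleGraph.card_edgeFinset_top_eq_card_choose_two, SimpleGraph.edgeFinset_card]

/-- a minimal counterexample is 4-connected (no cut of size ≤ 3)
and has no `K4`-cut. -/
theorem stmt7 (Ψ : ∀ (W : Type), SimpleGraph W → Prop)
    (hΨ : Ψ = ForestClass ∨ Ψ = BipartiteClass)
    (α β : ℝ) (hα1 : 2 < α) (hα2 : α ≤ 3) (hβ : 4 * α - β = 6)
    {V : Type} [Fintype V] (G : SimpleGraph V) (hG : MinCounterexample Ψ α β G) :
    (¬ ∃ M : Set V, IsVertexCut G M ∧ M.ncard ≤ 3) ∧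
    (¬ ∃ M : Set V, IsVertexCut G M ∧ M.ncard = 4 ∧ G.induce M = ⊤) := by
  refine ⟨?_, ?_⟩
  · rintro ⟨M, hcut, hM⟩
    have := Fintype.ofFinite M
    rw [← Nat.card_coe_set_eq, Nat.card_eq_fintype_card] at hM
    obtain ⟨h3, htop⟩ := eq_top_of_not_isAcyclic hM
      fun h => hG.2.2.1 ⟨M, hcut, psi_of_isAcyclic hΨ h⟩
    rw [← Nat.card_eq_fintype_card] at h3
    have hq := quality_clique_cut_neg hΨ hG hcut htop (by rw [← Nat.card_coe_set_eq, h3])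
    rw [htop, quality_top, h3] at hq
    norm_num [Nat.choose] at hq
    linarith
  · rintro ⟨M, hcut, h4, htop⟩
    have hq := quality_clique_cut_neg hΨ hG hcut htop (by omega)
    rw [htop, quality_top, Nat.card_coe_set_eq, h4] at hq
    norm_num [Nat.choose] at hq
    linarith
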